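/- arXiv:2602.04205 — 6 statements merged into one kernel-verified Lean document; each statement's English description precedes it below -/
import Mathlib

section
/- Let G : ℝ → ℝ be a continuous, compactly supported function and define u(r,t) = (1/r) ∫_{t−r}^{t+r} G(s) ds for r > 0, t ∈ ℝ. Then lim_{t→−∞} ∫_0^∞ | r ∂_t u(r,t) − G(r+t) |² dr = 0 and lim_{t→+∞} ∫_0^∞ | r ∂_t u(r,t) + G(−(r−t)) |² dr = 0. In other words, the radiation profile of u in the positive time direction is G_+(s) = −G(−s). -/
open MeasureTheory

noncomputable section

/-- The radial free wave with radiation profile `G` in the negative time direction: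
`u(r,t) = (1/r) ∫_{t-r}^{t+r} G(s) ds`. -/
noncomputable def freeWave (G : ℝ → ℝ) (r t : ℝ) : ℝ :=
  (1 / r) * ∫ s in (t - r)..(t + r), G s

/-!
For almost every `r` one has `r ∂ₜu(r,t) = G(t+r) - G(t-r)`: an incoming wave minus an outgoing one.
Removing one of the two leaves the other, whose squared norm over `r > 0` is exactly the mass of
`G²` on `(-∞, t)`, respectively on `(t, ∞)`, and these tails vanish as `t → -∞`, respectively
`t → ∞`.
-/

section ChangeOfVariables

variable {E : Type*} [NormedAddCommGroup E] [NormedSpace ℝ E]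

theorem integral_comp_sub_left_Ioi (f : ℝ → E) (a c : ℝ) :
    ∫ x in Set.Ioi a, f (c - x) = ∫ x in Set.Iio (c - a), f x := by
  simpa only [Set.preimage_const_sub_Iio, sub_sub_cancel] using
    (Measure.measurePreserving_sub_left volume c).setIntegral_preimage_emb
      (measurableEmbedding_subLeft c) f (Set.Iio (c - a))

theorem integral_comp_add_left_Ioi (f : ℝ → E) (a c : ℝ) :
    ∫ x in Set.Ioi a, f (c + x) = ∫ x in Set.Ioi (c + a), f x := by
  simpa only [Set.preimage_const_add_Ioi, add_sub_cancel_left] using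
    (measurePreserving_add_left volume c).setIntegral_preimage_emb
      (measurableEmbedding_addLeft c) f (Set.Ioi (c + a))

end ChangeOfVariables

section FreeWave

variable {G : ℝ → ℝ}

theorem freeWave_eq_sub_div (hG : LocallyIntegrable G) (r t : ℝ) :
    freeWave G r t = ((∫ s in 0..(t + r), G s) - ∫ s in 0..(t - r), G s) / r := by
  have hG_int (a b : ℝ) : IntervalIntegrable G volume a b :=
    (hG.integrableOn_isCompact isCompact_uIcc).intervalIntegrable
  rw [freeWave, one_div_mul_eq_div,
    intervalIntegral.integral_interval_sub_left (hG_int _ _) (hG_int _ _)]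

theorem ae_hasDerivAt_freeWave (hG : LocallyIntegrable G) (t : ℝ) :
    ∀ᵐ r, HasDerivAt (freeWave G r) ((G (t + r) - G (t - r)) / r) t := by
  have h_ftc := LocallyIntegrable.ae_hasDerivAt_integral hG
  filter_upwards [(measurePreserving_add_left volume t).quasiMeasurePreserving.ae h_ftc,
    (Measure.measurePreserving_sub_left volume t).quasiMeasurePreserving.ae h_ftc]
    with r h_add h_sub
  rw [funext (freeWave_eq_sub_div hG r)]
  exact (((h_add 0).comp_add_const t r).sub ((h_sub 0).comp_sub_const t r)).div_const r

theorem ae_mul_deriv_freeWave (hG : LocallyIntegrable G) (t : ℝ) :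
    ∀ᵐ r, r * deriv (freeWave G r) t = G (t + r) - G (t - r) := by
  filter_upwards [ae_hasDerivAt_freeWave hG t, Measure.ae_ne volume 0] with r h_deriv hr
  rw [h_deriv.deriv, mul_div_cancel₀ _ hr]

theorem integral_sq_mul_deriv_freeWave_sub (hG : LocallyIntegrable G) (t : ℝ) :
    ∫ r in Set.Ioi 0, (r * deriv (freeWave G r) t - G (r + t)) ^ 2 =
      ∫ s in Set.Iio t, G s ^ 2 := by
  suffices ∀ᵐ r, (r * deriv (freeWave G r) t - G (r + t)) ^ 2 = G (t - r) ^ 2 by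
    rw [integral_congr_ae (ae_restrict_of_ae this),
      integral_comp_sub_left_Ioi (fun s => G s ^ 2), sub_zero]
  filter_upwards [ae_mul_deriv_freeWave hG t] with r hr
  rw [hr, add_comm r t]
  ring

theorem integral_sq_mul_deriv_freeWave_add (hG : LocallyIntegrable G) (t : ℝ) :
    ∫ r in Set.Ioi 0, (r * deriv (freeWave G r) t + G (-(r - t))) ^ 2 =
      ∫ s in Set.Ioi t, G s ^ 2 := by
  suffices ∀ᵐ r, (r * deriv (freeWave G r) t + G (-(r - t))) ^ 2 = G (t + r) ^ 2 by
    rw [integral_congr_ae (ae_restrict_of_ae this),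
      integral_comp_add_left_Ioi (fun s => G s ^ 2), add_zero]
  filter_upwards [ae_mul_deriv_freeWave hG t] with r hr
  rw [hr, neg_sub, sub_add_cancel]

end FreeWave

theorem stmt5_general (G : ℝ → ℝ) (hG : MemLp G 2) :
    Filter.Tendsto
      (fun t => ∫ r in Set.Ioi (0:ℝ),
        (r * deriv (fun τ => freeWave G r τ) t - G (r + t)) ^ 2)
      Filter.atBot (nhds 0) ∧
    Filter.Tendsto
      (fun t => ∫ r in Set.Ioi (0:ℝ),
        (r * deriv (fun τ => freeWave G r τ) t + G (-(r - t))) ^ 2)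
      Filter.atTop (nhds 0) := by
  have hG_loc : LocallyIntegrable G := hG.locallyIntegrable one_le_two
  simp only [integral_sq_mul_deriv_freeWave_sub hG_loc, integral_sq_mul_deriv_freeWave_add hG_loc]
  exact ⟨tendsto_integral_Iio_zero Filter.tendsto_id, tendsto_integral_Ioi_zero Filter.tendsto_id⟩

theorem stmt5 (G : ℝ → ℝ) (hGc : Continuous G) (hGs : HasCompactSupport G) :
    Filter.Tendsto
      (fun t => ∫ r in Set.Ioi (0:ℝ),
        (r * deriv (fun τ => freeWave G r τ) t - G (r + t)) ^ 2)
      Filter.atBot (nhds 0) ∧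
    Filter.Tendsto
      (fun t => ∫ r in Set.Ioi (0:ℝ),
        (r * deriv (fun τ => freeWave G r τ) t + G (-(r - t))) ^ 2)
      Filter.atTop (nhds 0) :=
  stmt5_general G (hGc.memLp_of_hasCompactSupport hGs)

end
end

section
/- There exists an absolute constant C > 0 such that for all λ, λ' > 0 and every k ∈ {1,2,3,4}: ∫_ℝ ( ∫_{{x ∈ ℝ³ : |x| > |t|}} W_λ(x)^{2k} W_{λ'}(x)^{2(5−k)} dx )^{1/2} dt ≤ C · min{ (λ/λ')^{1/2}, (λ'/λ)^{1/2} }, i.e. ‖χ₀ W_λ^k W_{λ'}^{5−k}‖_{L¹L²(ℝ×ℝ³)} ≲ min{(λ/λ')^{1/2}, (λ'/λ)^{1/2}}. -/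
open MeasureTheory

noncomputable section

abbrev E3 : Type := EuclideanSpace ℝ (Fin 3)

/-- The rescaled ground state `W_λ(x) = λ^{-1/2} (1/3 + |x|²/λ²)^{-1/2}`. -/
noncomputable def groundState (lam : ℝ) (x : E3) : ℝ :=
  lam ^ (-(1/2) : ℝ) * (1/3 + ‖x‖ ^ 2 / lam ^ 2) ^ (-(1/2) : ℝ)

/-
Write `W_a(x)² = P_a(|x|)` with `P_a(s) = a / (a²/3 + s²)`. Since `P_a(s) ≤ 3/a` and
`s² P_a(s) ≤ a`, bounding one of the two profiles by its value at the origin and the other by its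
decay gives `s² P_a(s) P_b(s) ≤ 3 min (a/b) (b/a)`: this is the whole gain. What remains of the
integrand is at most `(P_a + P_b)³`. In the exterior region `|t| < r` two of these three factors
are bounded by their values at `t`, the third is integrated in `r`, and after the square root a
single factor `P_a + P_b` is integrated in `t`. Both integrals are scale invariant, because `P_a`
is a Cauchy density up to a constant independent of `a`.
-/

section Prerequisites

lemma rpow_mul_rpow_le_add_rpow {u v p q : ℝ} (hu : 0 ≤ u) (hv : 0 ≤ v) (hp : 0 ≤ p)
    (hq : 0 ≤ q) : u ^ p * v ^ q ≤ (u + v) ^ (p + q) := by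
  rw [Real.rpow_add_of_nonneg (add_nonneg hu hv) hp hq]
  gcongr <;> linarith

lemma setIntegral_fun_norm_addHaar {E F : Type*} [NormedAddCommGroup E] [NormedSpace ℝ E]
    [FiniteDimensional ℝ E] [Nontrivial E] [MeasurableSpace E] [BorelSpace E]
    [NormedAddCommGroup F] [NormedSpace ℝ F] (μ : Measure E) [μ.IsAddHaarMeasure]
    (f : ℝ → F) {s : Set ℝ} (hs : MeasurableSet s) :
    ∫ x in norm ⁻¹' s, f ‖x‖ ∂μ =
      Module.finrank ℝ E • μ.real (Metric.ball 0 1) •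
        ∫ r in Set.Ioi 0 ∩ s, r ^ (Module.finrank ℝ E - 1) • f r := by
  rw [← integral_indicator (measurable_norm hs), ← setIntegral_indicator hs]
  simp_rw [Set.indicator_smul]
  exact integral_fun_norm_addHaar μ (s.indicator f)

lemma setIntegral_fun_norm_gt_E3 {F : Type*} [NormedAddCommGroup F] [NormedSpace ℝ F]
    (f : ℝ → F) {c : ℝ} (hc : 0 ≤ c) :
    ∫ x in {x : E3 | c < ‖x‖}, f ‖x‖ = (4 * Real.pi) • ∫ r in Set.Ioi c, r ^ 2 • f r := by
  have hvol : (3 : ℝ) * (volume : Measure E3).real (Metric.ball 0 1) = 4 * Real.pi := by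
    rw [measureReal_def, EuclideanSpace.volume_ball_fin_three, ENNReal.ofReal_one, one_pow, one_mul,
      ENNReal.toReal_ofReal (by positivity)]
    ring
  have polar := setIntegral_fun_norm_addHaar (volume : Measure E3) f (measurableSet_Ioi (a := c))
  rwa [Set.Ioi_inter_Ioi, max_eq_right hc, finrank_euclideanSpace_fin, ← Nat.cast_smul_eq_nsmul ℝ,
    smul_smul, Nat.cast_ofNat, hvol] at polar

end Prerequisites

/-- The radial profile of the squared ground state: `W_a(x)² = sqProfile a ‖x‖`. It is defined on
all of `ℝ` because it is also evaluated at the time variable. -/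
def sqProfile (a s : ℝ) : ℝ := a / (a ^ 2 / 3 + s ^ 2)

section SqProfile

variable {a b : ℝ}

lemma sqProfile_pos (ha : 0 < a) (s : ℝ) : 0 < sqProfile a s := by
  unfold sqProfile; positivity

lemma groundState_nonneg (ha : 0 ≤ a) (x : E3) : 0 ≤ groundState a x := by
  unfold groundState; positivity

lemma groundState_rpow_two_mul (ha : 0 < a) (x : E3) (p : ℝ) :
    groundState a x ^ (2 * p) = sqProfile a ‖x‖ ^ p := by
  have h : groundState a x = sqProfile a ‖x‖ ^ (1 / 2 : ℝ) := by
    rw [groundState, ← Real.mul_rpow ha.le (by positivity), Real.rpow_neg (by positivity),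
      ← Real.inv_rpow (by positivity), sqProfile]
    congr 1
    field_simp
  rw [h, ← Real.rpow_mul (sqProfile_pos ha _).le]
  congr 1
  ring

lemma sqProfile_le (ha : 0 < a) (s : ℝ) : sqProfile a s ≤ 3 / a := by
  rw [sqProfile, div_le_div_iff₀ (by positivity) ha]
  linarith [sq_nonneg s, sq a]

lemma sq_mul_sqProfile_le (ha : 0 < a) (s : ℝ) : s ^ 2 * sqProfile a s ≤ a := by
  rw [sqProfile, mul_div_assoc', div_le_iff₀ (by positivity), mul_comm]
  gcongr
  linarith [sq_nonneg a]

lemma sqProfile_le_of_abs_le (ha : 0 < a) {s t : ℝ} (hst : |t| ≤ |s|) :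
    sqProfile a s ≤ sqProfile a t := by
  have : t ^ 2 ≤ s ^ 2 := sq_le_sq.mpr hst
  unfold sqProfile
  gcongr

lemma sq_mul_sqProfile_mul_sqProfile_le (ha : 0 < a) (hb : 0 < b) (s : ℝ) :
    s ^ 2 * (sqProfile a s * sqProfile b s) ≤ 3 * min (a / b) (b / a) := by
  have bound {c d : ℝ} (hc : 0 < c) (hd : 0 < d) :
      s ^ 2 * sqProfile c s * sqProfile d s ≤ 3 * (c / d) :=
    calc s ^ 2 * sqProfile c s * sqProfile d s ≤ c * (3 / d) :=
          mul_le_mul (sq_mul_sqProfile_le hc s) (sqProfile_le hd s) (sqProfile_pos hd s).le hc.le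
      _ = 3 * (c / d) := by ring
  rw [mul_min_of_nonneg _ _ (by norm_num)]
  refine le_min ?_ ?_
  · linarith [bound ha hb]
  · linarith [bound hb ha]

lemma sq_mul_sqProfile_rpow_mul_le (ha : 0 < a) (hb : 0 < b) {p q : ℝ} (hp : 1 ≤ p) (hq : 1 ≤ q)
    (s : ℝ) :
    s ^ 2 * (sqProfile a s ^ p * sqProfile b s ^ q) ≤
      3 * min (a / b) (b / a) * (sqProfile a s + sqProfile b s) ^ (p + q - 2) := by
  have hA := sqProfile_pos ha s
  have hB := sqProfile_pos hb s
  calc s ^ 2 * (sqProfile a s ^ p * sqProfile b s ^ q)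
      = s ^ 2 * (sqProfile a s * sqProfile b s) *
          (sqProfile a s ^ (p - 1) * sqProfile b s ^ (q - 1)) := by
        rw [Real.rpow_sub_one hA.ne', Real.rpow_sub_one hB.ne']
        field_simp
    _ ≤ 3 * min (a / b) (b / a) *
          (sqProfile a s + sqProfile b s) ^ ((p - 1) + (q - 1)) := by
        refine mul_le_mul (sq_mul_sqProfile_mul_sqProfile_le ha hb s) ?_ (by positivity)
          (by positivity)
        exact rpow_mul_rpow_le_add_rpow hA.le hB.le (sub_nonneg.2 hp) (sub_nonneg.2 hq)
    _ = 3 * min (a / b) (b / a) * (sqProfile a s + sqProfile b s) ^ (p + q - 2) := by ring_nf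

lemma integral_sqProfile (ha : 0 < a) : ∫ s, sqProfile a s = √3 * Real.pi := by
  have h (s : ℝ) : sqProfile a s = 3 / a * (1 + (s / (a / √3)) ^ 2)⁻¹ := by
    rw [sqProfile, div_pow, div_pow, Real.sq_sqrt (by norm_num)]
    field_simp
  simp_rw [h]
  rw [integral_const_mul, Measure.integral_comp_div (fun s : ℝ => (1 + s ^ 2)⁻¹),
    integral_univ_inv_one_add_sq, abs_of_pos (by positivity), smul_eq_mul]
  field_simp
  exact (Real.sq_sqrt (by norm_num)).symm

lemma integrable_sqProfile (ha : 0 < a) : Integrable (sqProfile a) :=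
  .of_integral_ne_zero <| by rw [integral_sqProfile ha]; positivity

lemma integral_sqProfile_add_sqProfile (ha : 0 < a) (hb : 0 < b) :
    ∫ s, (sqProfile a s + sqProfile b s) = 2 * √3 * Real.pi := by
  rw [integral_add (integrable_sqProfile ha) (integrable_sqProfile hb), integral_sqProfile ha,
    integral_sqProfile hb]
  ring

end SqProfile

section ExteriorEstimate

variable {a b θ : ℝ}

lemma sq_mul_sqProfile_rpow_mul_le_of_abs_lt (ha : 0 < a) (hb : 0 < b) (h1 : 1 ≤ θ) (h4 : θ ≤ 4)
    {t r : ℝ} (htr : |t| < r) :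
    r ^ 2 * (sqProfile a r ^ θ * sqProfile b r ^ (5 - θ)) ≤
      3 * min (a / b) (b / a) * (sqProfile a t + sqProfile b t) ^ 2 *
        (sqProfile a r + sqProfile b r) := by
  have hS : 0 < sqProfile a r + sqProfile b r := add_pos (sqProfile_pos ha r) (sqProfile_pos hb r)
  have hrt : |t| ≤ |r| := htr.le.trans (le_abs_self r)
  calc r ^ 2 * (sqProfile a r ^ θ * sqProfile b r ^ (5 - θ))
      ≤ 3 * min (a / b) (b / a) * (sqProfile a r + sqProfile b r) ^ (θ + (5 - θ) - 2) :=
        sq_mul_sqProfile_rpow_mul_le ha hb h1 (by linarith) r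
    _ = 3 * min (a / b) (b / a) * (sqProfile a r + sqProfile b r) ^ 2 *
          (sqProfile a r + sqProfile b r) := by
        rw [show θ + (5 - θ) - 2 = (3 : ℕ) by push_cast; ring, Real.rpow_natCast]
        ring
    _ ≤ 3 * min (a / b) (b / a) * (sqProfile a t + sqProfile b t) ^ 2 *
          (sqProfile a r + sqProfile b r) := by
        gcongr
        · exact sqProfile_le_of_abs_le ha hrt
        · exact sqProfile_le_of_abs_le hb hrt

lemma setIntegral_Ioi_sq_mul_sqProfile_rpow_mul_le (ha : 0 < a) (hb : 0 < b) (h1 : 1 ≤ θ)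
    (h4 : θ ≤ 4) (t : ℝ) :
    ∫ r in Set.Ioi |t|, r ^ 2 * (sqProfile a r ^ θ * sqProfile b r ^ (5 - θ)) ≤
      3 * min (a / b) (b / a) * (sqProfile a t + sqProfile b t) ^ 2 * (2 * √3 * Real.pi) := by
  set M := 3 * min (a / b) (b / a) * (sqProfile a t + sqProfile b t) ^ 2
  have hM : 0 ≤ M := by positivity
  have hint : Integrable fun r => M * (sqProfile a r + sqProfile b r) :=
    ((integrable_sqProfile ha).add (integrable_sqProfile hb)).const_mul M
  have hlhs_nonneg (r : ℝ) : 0 ≤ r ^ 2 * (sqProfile a r ^ θ * sqProfile b r ^ (5 - θ)) := by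
    have := sqProfile_pos ha r
    have := sqProfile_pos hb r
    positivity
  have hrhs_nonneg (r : ℝ) : 0 ≤ M * (sqProfile a r + sqProfile b r) :=
    mul_nonneg hM (add_pos (sqProfile_pos ha r) (sqProfile_pos hb r)).le
  calc ∫ r in Set.Ioi |t|, r ^ 2 * (sqProfile a r ^ θ * sqProfile b r ^ (5 - θ))
      ≤ ∫ r in Set.Ioi |t|, M * (sqProfile a r + sqProfile b r) :=
        integral_mono_of_nonneg (.of_forall hlhs_nonneg) hint.integrableOn
          (ae_restrict_of_forall_mem measurableSet_Ioi fun _ hr =>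
            sq_mul_sqProfile_rpow_mul_le_of_abs_lt ha hb h1 h4 hr)
    _ ≤ ∫ r, M * (sqProfile a r + sqProfile b r) :=
        setIntegral_le_integral hint (.of_forall hrhs_nonneg)
    _ = M * (2 * √3 * Real.pi) := by
        rw [integral_const_mul, integral_sqProfile_add_sqProfile ha hb]

lemma setIntegral_groundState_rpow_mul_le (ha : 0 < a) (hb : 0 < b) (h1 : 1 ≤ θ) (h4 : θ ≤ 4)
    (t : ℝ) :
    ∫ x in {x : E3 | |t| < ‖x‖}, groundState a x ^ (2 * θ) * groundState b x ^ (2 * (5 - θ)) ≤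
      24 * √3 * Real.pi ^ 2 * min (a / b) (b / a) * (sqProfile a t + sqProfile b t) ^ 2 := by
  simp_rw [groundState_rpow_two_mul ha, groundState_rpow_two_mul hb]
  calc ∫ x in {x : E3 | |t| < ‖x‖}, sqProfile a ‖x‖ ^ θ * sqProfile b ‖x‖ ^ (5 - θ)
      = 4 * Real.pi *
          ∫ r in Set.Ioi |t|, r ^ 2 * (sqProfile a r ^ θ * sqProfile b r ^ (5 - θ)) :=
        setIntegral_fun_norm_gt_E3 (fun r => sqProfile a r ^ θ * sqProfile b r ^ (5 - θ))
          (abs_nonneg t)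
    _ ≤ 4 * Real.pi * (3 * min (a / b) (b / a) * (sqProfile a t + sqProfile b t) ^ 2 *
          (2 * √3 * Real.pi)) := by
        gcongr
        exact setIntegral_Ioi_sq_mul_sqProfile_rpow_mul_le ha hb h1 h4 t
    _ = _ := by ring

lemma setIntegral_groundState_rpow_mul_rpow_half_le (ha : 0 < a) (hb : 0 < b) (h1 : 1 ≤ θ)
    (h4 : θ ≤ 4) (t : ℝ) :
    (∫ x in {x : E3 | |t| < ‖x‖},
        groundState a x ^ (2 * θ) * groundState b x ^ (2 * (5 - θ))) ^ ((1 : ℝ) / 2) ≤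
      √(24 * √3 * Real.pi ^ 2) * min √(a / b) √(b / a) * (sqProfile a t + sqProfile b t) := by
  have hS : 0 < sqProfile a t + sqProfile b t := add_pos (sqProfile_pos ha t) (sqProfile_pos hb t)
  rw [← Real.sqrt_eq_rpow, ← Real.sqrt_monotone.map_min]
  refine (Real.sqrt_le_sqrt (setIntegral_groundState_rpow_mul_le ha hb h1 h4 t)).trans_eq ?_
  rw [Real.sqrt_mul (by positivity), Real.sqrt_mul (by positivity), Real.sqrt_sq hS.le]

end ExteriorEstimate

theorem stmt7_general :
    ∃ C > (0 : ℝ), ∀ a b : ℝ, 0 < a → 0 < b → ∀ θ : ℝ, 1 ≤ θ → θ ≤ 4 →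
      ∫ t : ℝ, (∫ x in {x : E3 | |t| < ‖x‖},
          groundState a x ^ (2 * θ) * groundState b x ^ (2 * (5 - θ))) ^ ((1 : ℝ) / 2) ≤
        C * min √(a / b) √(b / a) := by
  refine ⟨√(24 * √3 * Real.pi ^ 2) * (2 * √3 * Real.pi), by positivity, ?_⟩
  intro a b ha hb θ h1 h4
  set K := √(24 * √3 * Real.pi ^ 2)
  set m := min √(a / b) √(b / a)
  calc _ ≤ ∫ t, K * m * (sqProfile a t + sqProfile b t) := by
        refine integral_mono_of_nonneg (.of_forall fun t => ?_)
          (((integrable_sqProfile ha).add (integrable_sqProfile hb)).const_mul (K * m))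
          (.of_forall (setIntegral_groundState_rpow_mul_rpow_half_le ha hb h1 h4))
        refine Real.rpow_nonneg (integral_nonneg fun x => ?_) _
        exact mul_nonneg (Real.rpow_nonneg (groundState_nonneg ha.le x) _)
          (Real.rpow_nonneg (groundState_nonneg hb.le x) _)
    _ = K * m * (2 * √3 * Real.pi) := by
        rw [integral_const_mul, integral_sqProfile_add_sqProfile ha hb]
    _ = K * (2 * √3 * Real.pi) * m := by ring

theorem stmt7 :
    ∃ C > (0:ℝ), ∀ (lam lam' : ℝ), 0 < lam → 0 < lam' → ∀ k : ℕ, 1 ≤ k → k ≤ 4 →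
      (∫ t : ℝ, (∫ x in {x : E3 | |t| < ‖x‖},
          (groundState lam x) ^ (2 * k) * (groundState lam' x) ^ (2 * (5 - k))) ^ ((1:ℝ)/2))
        ≤ C * min (Real.sqrt (lam / lam')) (Real.sqrt (lam' / lam)) := by
  obtain ⟨C, hC, h⟩ := stmt7_general
  refine ⟨C, hC, fun a b ha hb k h1 h4 => ?_⟩
  simpa [← Real.rpow_natCast, Nat.cast_sub (h4.trans (by norm_num : 4 ≤ 5))] using
    h a b ha hb k (mod_cast h1) (mod_cast h4)

end
end

section
/- There exists an absolute constant C > 0 with the following property. Let G : ℝ → ℝ be locally integrable with M := sup_{r>0} (1/r) ∫_{−r}^{r} |G(s)| ds < ∞, and let v(x,t) = (1/|x|) ∫_{t−|x|}^{t+|x|} G(s) ds for x ≠ 0. Then for every λ > 0: ∫_ℝ ( ∫_{{x : |x| > |t|}} W_λ(x)^{8} |v(x,t)|² dx )^{1/2} dt ≤ C λ^{1/2} M, i.e. ‖χ₀ W_λ⁴ v‖_{L¹L²} ≲ λ^{1/2} sup_{r>0} (1/r)∫_{−r}^{r}|G(s)| ds. -/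
/-!
If `|t| ≤ r`, the window `[t - r, t + r]` of the free wave lies in `[-2r, 2r]`, so `|v| ≤ 2M`
outside the light cone. There also `W_λ(x)² ≤ W_λ(t)²`, since `W_λ` is radially decreasing, hence
`‖W_λ⁴ v(t)‖_{L²(|x| > |t|)} ≤ 2M · W_λ(t)² · ‖W_λ²‖_{L²(ℝ³)}`.
By scaling, `∫ W_λ(t)² dt = √3 π` does not depend on `λ`, while `‖W_λ²‖_{L²}² = ∫ W_λ⁴` is
proportional to `λ`; this is the source of the factor `λ^{1/2}`.
-/

open MeasureTheory

noncomputable section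

section Integrals

lemma sqrt_integral_mul_sq_le {α : Type*} [MeasurableSpace α] {μ : Measure α} {f g : α → ℝ} {B : ℝ}
    (hB : 0 ≤ B) (hf : Integrable (fun x => f x ^ 2) μ) (hg : ∀ᵐ x ∂μ, |g x| ≤ B) :
    √(∫ x, (g x * f x) ^ 2 ∂μ) ≤ B * √(∫ x, f x ^ 2 ∂μ) := by
  have hle : ∫ x, (g x * f x) ^ 2 ∂μ ≤ ∫ x, B ^ 2 * f x ^ 2 ∂μ := by
    refine integral_mono_of_nonneg (.of_forall fun x => sq_nonneg _) (hf.const_mul _) ?_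
    filter_upwards [hg] with x hx
    rw [mul_pow]
    exact mul_le_mul_of_nonneg_right (sq_le_sq' (abs_le.1 hx).1 (abs_le.1 hx).2) (sq_nonneg _)
  calc √(∫ x, (g x * f x) ^ 2 ∂μ) ≤ √(B ^ 2 * ∫ x, f x ^ 2 ∂μ) := by
        rw [← integral_const_mul]
        exact Real.sqrt_le_sqrt hle
    _ = B * √(∫ x, f x ^ 2 ∂μ) := by rw [Real.sqrt_mul (sq_nonneg B), Real.sqrt_sq hB]

lemma integral_inv_one_add_mul_sq (c : ℝ) :
    ∫ t : ℝ, (1 + (c * t) ^ 2)⁻¹ = |c⁻¹| * Real.pi := by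
  rw [Measure.integral_comp_mul_left (fun t : ℝ => (1 + t ^ 2)⁻¹), integral_univ_inv_one_add_sq,
    smul_eq_mul]

variable {E : Type*} [NormedAddCommGroup E] [NormedSpace ℝ E] [FiniteDimensional ℝ E]
  [MeasurableSpace E] [BorelSpace E] (μ : Measure E) [μ.IsAddHaarMeasure]

lemma integrable_inv_one_add_norm_sq_sq (hE : Module.finrank ℝ E < 4) :
    Integrable (fun x : E => ((1 + ‖x‖ ^ 2)⁻¹) ^ 2) μ := by
  have hrpow : Integrable (fun x : E => (1 + ‖x‖ ^ 2) ^ (-4 / 2 : ℝ)) μ :=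
    integrable_rpow_neg_one_add_norm_sq (by exact_mod_cast hE)
  refine hrpow.congr (.of_forall fun x => ?_)
  have hx : 0 ≤ 1 + ‖x‖ ^ 2 := by positivity
  norm_num [Real.rpow_neg hx]

lemma integral_inv_one_add_norm_sq_sq_pos (hE : Module.finrank ℝ E < 4) :
    0 < ∫ x : E, ((1 + ‖x‖ ^ 2)⁻¹) ^ 2 ∂μ := by
  have hcont : Continuous fun x : E => ((1 + ‖x‖ ^ 2)⁻¹) ^ 2 :=
    ((by fun_prop : Continuous fun x : E => 1 + ‖x‖ ^ 2).inv₀ fun x => by positivity).pow 2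
  exact integral_pos_of_integrable_nonneg_nonzero (x := 0) hcont
    (integrable_inv_one_add_norm_sq_sq μ hE) (fun x => sq_nonneg _) (by simp)

end Integrals

section GroundState

/-- The radial profile of `W_λ²`, that is `λ⁻¹ (1/3 + r²/λ²)⁻¹`, written as a dilate of
`(1 + r²)⁻¹` so that its integrals reduce to standard ones. -/
def groundStateSqProfile (lam r : ℝ) : ℝ :=
  3 * lam⁻¹ * (1 + (√3 * lam⁻¹ * r) ^ 2)⁻¹

variable {lam : ℝ}

lemma rpow_neg_half_sq {a : ℝ} (ha : 0 ≤ a) : (a ^ (-(1/2) : ℝ)) ^ 2 = a⁻¹ := by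
  rw [← Real.rpow_mul_natCast ha]
  norm_num [Real.rpow_neg_one]

lemma groundState_sq (hlam : 0 ≤ lam) (x : E3) :
    groundState lam x ^ 2 = groundStateSqProfile lam ‖x‖ := by
  have hsum : 1 + (√3 * lam⁻¹ * ‖x‖) ^ 2 = 3 * (1/3 + ‖x‖ ^ 2 / lam ^ 2) := by
    rw [mul_pow, mul_pow, Real.sq_sqrt zero_le_three]
    ring
  rw [groundState, groundStateSqProfile, hsum, mul_pow, rpow_neg_half_sq hlam,
    rpow_neg_half_sq (by positivity), mul_inv]
  ring

lemma groundStateSqProfile_nonneg (hlam : 0 ≤ lam) (r : ℝ) : 0 ≤ groundStateSqProfile lam r := by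
  unfold groundStateSqProfile
  positivity

lemma groundStateSqProfile_le_of_abs_le (hlam : 0 ≤ lam) {r s : ℝ} (h : |s| ≤ |r|) :
    groundStateSqProfile lam r ≤ groundStateSqProfile lam s := by
  have hsq : s ^ 2 ≤ r ^ 2 := sq_le_sq.2 h
  unfold groundStateSqProfile
  rw [mul_pow _ r, mul_pow _ s]
  gcongr

lemma integrable_groundStateSqProfile (hlam : lam ≠ 0) :
    Integrable (groundStateSqProfile lam) :=
  (integrable_inv_one_add_sq.comp_mul_left' (by positivity)).const_mul _

lemma integral_groundStateSqProfile (hlam : 0 < lam) :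
    ∫ t, groundStateSqProfile lam t = √3 * Real.pi := by
  simp only [groundStateSqProfile]
  rw [integral_const_mul, integral_inv_one_add_mul_sq, abs_of_pos (by positivity)]
  field_simp
  rw [Real.sq_sqrt zero_le_three]

lemma groundState_pow_four (hlam : 0 ≤ lam) (x : E3) :
    groundState lam x ^ 4 =
      (3 * lam⁻¹) ^ 2 * ((1 + ‖(√3 * lam⁻¹) • x‖ ^ 2)⁻¹) ^ 2 := by
  have hnorm : ‖(√3 * lam⁻¹) • x‖ = √3 * lam⁻¹ * ‖x‖ := norm_smul_of_nonneg (by positivity) x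
  rw [hnorm, ← mul_pow, ← groundStateSqProfile, ← groundState_sq hlam, ← pow_mul]

lemma integrable_groundState_pow_four (hlam : 0 < lam) :
    Integrable fun x : E3 => groundState lam x ^ 4 := by
  simp only [groundState_pow_four hlam.le]
  exact ((integrable_inv_one_add_norm_sq_sq volume (by simp)).comp_smul
    (by positivity)).const_mul _

lemma integral_groundState_pow_four (hlam : 0 < lam) :
    ∫ x, groundState lam x ^ 4 = √3 * (∫ x : E3, ((1 + ‖x‖ ^ 2)⁻¹) ^ 2) * lam := by
  simp only [groundState_pow_four hlam.le]
  rw [integral_const_mul, Measure.integral_comp_smul volume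
    (fun x : E3 => ((1 + ‖x‖ ^ 2)⁻¹) ^ 2), finrank_euclideanSpace_fin,
    abs_of_pos (by positivity), smul_eq_mul]
  have hsqrt : √3 ^ 4 = 9 := by
    rw [pow_mul √3 2 2, Real.sq_sqrt zero_le_three]
    norm_num
  field_simp
  rw [hsqrt]
  norm_num

end GroundState

section FreeWave

variable {F : Type*} [NormedAddCommGroup F] [NormedSpace ℝ F]

/-- The radial free wave with radiation profile `G` in the negative time direction, at time `t` and
distance `r = |x|` from the origin. -/
def radialFreeWave (G : ℝ → F) (t r : ℝ) : F :=
  (1 / r) • ∫ s in (t - r)..(t + r), G s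

variable {G : ℝ → F} {M : ℝ}

lemma norm_radialFreeWave_le (hG : LocallyIntegrable G)
    (hM : ∀ r > (0 : ℝ), (1 / r) * ∫ s in (-r)..r, ‖G s‖ ≤ M) {t r : ℝ} (hr : 0 < r)
    (htr : |t| ≤ r) : ‖radialFreeWave G t r‖ ≤ 2 * M := by
  obtain ⟨hneg, hpos⟩ := abs_le.1 htr
  have hint : IntervalIntegrable (fun s => ‖G s‖) volume (-(2 * r)) (2 * r) :=
    (hG.integrableOn_isCompact isCompact_uIcc).intervalIntegrable.norm
  have hwindow : ‖∫ s in (t - r)..(t + r), G s‖ ≤ ∫ s in (-(2 * r))..(2 * r), ‖G s‖ :=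
    (intervalIntegral.norm_integral_le_integral_norm (by linarith)).trans <|
      intervalIntegral.integral_mono_interval (by linarith) (by linarith) (by linarith)
        (.of_forall fun s => norm_nonneg _) hint
  calc ‖radialFreeWave G t r‖ = (1 / r) * ‖∫ s in (t - r)..(t + r), G s‖ :=
        norm_smul_of_nonneg (by positivity) _
    _ ≤ (1 / r) * ∫ s in (-(2 * r))..(2 * r), ‖G s‖ := by gcongr
    _ = 2 * ((1 / (2 * r)) * ∫ s in (-(2 * r))..(2 * r), ‖G s‖) := by field_simp
    _ ≤ 2 * M := by gcongr; exact hM (2 * r) (by positivity)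

lemma sqrt_integral_exterior_groundState_radialFreeWave_le (hG : LocallyIntegrable G)
    (hM : ∀ r > (0 : ℝ), (1 / r) * ∫ s in (-r)..r, ‖G s‖ ≤ M) {lam : ℝ} (hlam : 0 < lam) (t : ℝ) :
    √(∫ x in {x : E3 | |t| < ‖x‖}, groundState lam x ^ 8 * ‖radialFreeWave G t ‖x‖‖ ^ 2) ≤
      groundStateSqProfile lam t * (2 * M) * √(∫ x, groundState lam x ^ 4) := by
  have hM₀ : 0 ≤ 2 * M :=
    (norm_nonneg _).trans (norm_radialFreeWave_le hG hM one_pos (abs_zero.trans_le zero_le_one))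
  have hprofile := groundStateSqProfile_nonneg hlam.le
  have hint : Integrable fun x : E3 => (groundState lam x ^ 2) ^ 2 := by
    simpa only [← pow_mul] using integrable_groundState_pow_four hlam
  have hfactor : ∀ᵐ x ∂(volume : Measure E3).restrict {x | |t| < ‖x‖},
      |groundState lam x ^ 2 * ‖radialFreeWave G t ‖x‖‖| ≤
        groundStateSqProfile lam t * (2 * M) := by
    filter_upwards [ae_restrict_mem (measurableSet_lt measurable_const measurable_norm)]
      with x (hx : |t| < ‖x‖)
    rw [abs_of_nonneg (by positivity), groundState_sq hlam.le]
    exact mul_le_mul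
      (groundStateSqProfile_le_of_abs_le hlam.le (hx.le.trans (le_abs_self _)))
      (norm_radialFreeWave_le hG hM ((abs_nonneg t).trans_lt hx) hx.le)
      (norm_nonneg _) (hprofile t)
  calc √(∫ x in {x : E3 | |t| < ‖x‖}, groundState lam x ^ 8 * ‖radialFreeWave G t ‖x‖‖ ^ 2)
      = √(∫ x in {x : E3 | |t| < ‖x‖},
          (groundState lam x ^ 2 * ‖radialFreeWave G t ‖x‖‖ * groundState lam x ^ 2) ^ 2) := by
        ring_nf
    _ ≤ groundStateSqProfile lam t * (2 * M) *
          √(∫ x in {x : E3 | |t| < ‖x‖}, (groundState lam x ^ 2) ^ 2) :=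
        sqrt_integral_mul_sq_le (mul_nonneg (hprofile t) hM₀) hint.integrableOn hfactor
    _ ≤ groundStateSqProfile lam t * (2 * M) * √(∫ x, (groundState lam x ^ 2) ^ 2) :=
        mul_le_mul_of_nonneg_left
          (Real.sqrt_le_sqrt (setIntegral_le_integral hint (.of_forall fun x => sq_nonneg _)))
          (mul_nonneg (hprofile t) hM₀)
    _ = groundStateSqProfile lam t * (2 * M) * √(∫ x, groundState lam x ^ 4) := by
        simp only [← pow_mul, Nat.reduceMul]

theorem stmt8_general [CompleteSpace F] (hG : LocallyIntegrable G)
    (hM : ∀ r > (0 : ℝ), (1 / r) * ∫ s in (-r)..r, ‖G s‖ ≤ M) {lam : ℝ} (hlam : 0 < lam) :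
    ∫ t : ℝ, √(∫ x in {x : E3 | |t| < ‖x‖},
        groundState lam x ^ 8 * ‖radialFreeWave G t ‖x‖‖ ^ 2) ≤
      2 * (√3 * Real.pi) * √(√3 * ∫ x : E3, ((1 + ‖x‖ ^ 2)⁻¹) ^ 2) * √lam * M := by
  calc ∫ t : ℝ, √(∫ x in {x : E3 | |t| < ‖x‖},
          groundState lam x ^ 8 * ‖radialFreeWave G t ‖x‖‖ ^ 2)
      ≤ ∫ t, groundStateSqProfile lam t * (2 * M) * √(∫ x, groundState lam x ^ 4) :=
        integral_mono_of_nonneg (.of_forall fun t => Real.sqrt_nonneg _)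
          (((integrable_groundStateSqProfile hlam.ne').mul_const _).mul_const _)
          (.of_forall (sqrt_integral_exterior_groundState_radialFreeWave_le hG hM hlam))
    _ = √3 * Real.pi * (2 * M) * √(√3 * (∫ x : E3, ((1 + ‖x‖ ^ 2)⁻¹) ^ 2) * lam) := by
        rw [integral_mul_const, integral_mul_const, integral_groundStateSqProfile hlam,
          integral_groundState_pow_four hlam]
    _ = 2 * (√3 * Real.pi) * √(√3 * ∫ x : E3, ((1 + ‖x‖ ^ 2)⁻¹) ^ 2) * √lam * M := by
        rw [Real.sqrt_mul' _ hlam.le]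
        ring

end FreeWave

theorem stmt8 :
    ∃ C > (0:ℝ), ∀ (G : ℝ → ℝ), LocallyIntegrable G volume →
      ∀ M : ℝ, (∀ r > (0:ℝ), (1 / r) * ∫ s in (-r)..r, |G s| ≤ M) →
      ∀ lam > (0:ℝ),
        (∫ t : ℝ, (∫ x in {x : E3 | |t| < ‖x‖},
            (groundState lam x) ^ 8 *
              ((1 / ‖x‖) * ∫ s in (t - ‖x‖)..(t + ‖x‖), G s) ^ 2) ^ ((1:ℝ)/2))
          ≤ C * Real.sqrt lam * M := by
  have hK := integral_inv_one_add_norm_sq_sq_pos (volume : Measure E3) (by simp)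
  refine ⟨2 * (√3 * Real.pi) * √(√3 * ∫ x : E3, ((1 + ‖x‖ ^ 2)⁻¹) ^ 2), by positivity,
    fun G hG M hM lam hlam => ?_⟩
  simpa only [radialFreeWave, smul_eq_mul, Real.norm_eq_abs, sq_abs, Real.sqrt_eq_rpow] using
    stmt8_general hG hM hlam

end
end

section
/- There exists an absolute constant C > 0 such that for all λ, λ' > 0 with λ' ≤ λ and every ℓ ∈ {1,2,3,4,5}: ∫_{ℝ³} W_λ(x)^{ℓ} W_{λ'}(x)^{6−ℓ} dx ≤ C (λ'/λ)^{1/2}. -/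
open MeasureTheory

noncomputable section

/-!
For `1 ≤ l ≤ 5` one has `a ^ l * b ^ (6 - l) ≤ a * b ^ 5 + b * a ^ 5`, so only `∫ W_λ W_μ ^ 5`
has to be estimated. The total exponent `6` is critical: dilations leave this integral invariant,
hence with `t = λ / μ` it equals `∫ W_t W_1 ^ 5`. The two pointwise bounds `W_t ≤ √(3 / t)` and
`W_t ≤ √t / |x|` control it by multiples of `t ^ (-1/2)` and `t ^ (1/2)`, because `W_1 ^ 5` and
`|x|⁻¹ W_1 ^ 5` are both integrable on `ℝ³`.
-/

section Powers

variable {R : Type*} [CommSemiring R] [LinearOrder R] [IsStrictOrderedRing R] {a b : R}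

lemma pow_mul_pow_le_pow_add_pow (ha : 0 ≤ a) (hb : 0 ≤ b) (m n : ℕ) :
    a ^ m * b ^ n ≤ a ^ (m + n) + b ^ (m + n) := by
  rcases le_total a b with hab | hba
  · calc a ^ m * b ^ n ≤ b ^ m * b ^ n := by gcongr
      _ = b ^ (m + n) := (pow_add b m n).symm
      _ ≤ a ^ (m + n) + b ^ (m + n) := le_add_of_nonneg_left (pow_nonneg ha _)
  · calc a ^ m * b ^ n ≤ a ^ m * a ^ n := by gcongr
      _ = a ^ (m + n) := (pow_add a m n).symm
      _ ≤ a ^ (m + n) + b ^ (m + n) := le_add_of_nonneg_right (pow_nonneg hb _)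

lemma pow_succ_mul_pow_succ_le (ha : 0 ≤ a) (hb : 0 ≤ b) (m n : ℕ) :
    a ^ (m + 1) * b ^ (n + 1) ≤ a * b ^ (m + n + 1) + b * a ^ (m + n + 1) :=
  calc a ^ (m + 1) * b ^ (n + 1) = a * b * (a ^ m * b ^ n) := by ring
    _ ≤ a * b * (a ^ (m + n) + b ^ (m + n)) := by
      gcongr
      exact pow_mul_pow_le_pow_add_pow ha hb m n
    _ = a * b ^ (m + n + 1) + b * a ^ (m + n + 1) := by ring

end Powers

section Integrability

open Set Filter Asymptotics Topology Module

lemma integrableOn_Ioi_rpow_mul_add_sq_rpow {c s r : ℝ} (hc : 0 < c) (hs : 0 < s) (hsr : s < r) :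
    IntegrableOn (fun t : ℝ ↦ t ^ (s - 1) * (c + t ^ 2) ^ (-r / 2)) (Ioi 0) := by
  have hcont : Continuous fun t : ℝ ↦ (c + t ^ 2) ^ (-r / 2) :=
    Continuous.rpow_const (by fun_prop) fun t ↦ Or.inl (by positivity)
  have h_top : (fun t : ℝ ↦ (c + t ^ 2) ^ (-r / 2)) =O[atTop] (· ^ (-r)) := by
    refine .of_norm_eventuallyLE ?_
    filter_upwards [eventually_gt_atTop 0] with t ht
    rw [Real.norm_of_nonneg (by positivity)]
    calc (c + t ^ 2) ^ (-r / 2) ≤ (t ^ 2) ^ (-r / 2) :=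
          Real.rpow_le_rpow_of_nonpos (by positivity) (by linarith) (by linarith)
      _ = t ^ (-r) := by rw [Real.rpow_div_two_eq_sqrt _ (by positivity), Real.sqrt_sq ht.le]
  have h_zero : (fun t : ℝ ↦ (c + t ^ 2) ^ (-r / 2)) =O[𝓝[>] 0] (· ^ (-0 : ℝ)) := by
    simpa only [neg_zero, Real.rpow_zero] using
      (hcont.continuousAt.tendsto.mono_left nhdsWithin_le_nhds).isBigO_one ℝ
  exact mellin_convergent_of_isBigO_scalar (hcont.locallyIntegrable.locallyIntegrableOn _)
    h_top hsr h_zero hs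

variable {E : Type*} [NormedAddCommGroup E] [NormedSpace ℝ E] [FiniteDimensional ℝ E]
  [Nontrivial E] [MeasurableSpace E] [BorelSpace E] (μ : Measure E) [μ.IsAddHaarMeasure]

lemma integrable_norm_rpow_mul_add_norm_sq_rpow {c s r : ℝ} (hc : 0 < c)
    (hs : s < finrank ℝ E) (hsr : finrank ℝ E < s + r) :
    Integrable (fun x : E ↦ ‖x‖ ^ (-s) * (c + ‖x‖ ^ 2) ^ (-r / 2)) μ := by
  rw [integrable_fun_norm_addHaar μ (f := fun t ↦ t ^ (-s) * (c + t ^ 2) ^ (-r / 2))]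
  refine (integrableOn_Ioi_rpow_mul_add_sq_rpow hc (sub_pos.mpr hs)
    (sub_lt_iff_lt_add'.mpr hsr)).congr_fun (fun t (ht : 0 < t) ↦ ?_) measurableSet_Ioi
  have hexp : (finrank ℝ E - s - 1 : ℝ) = (finrank ℝ E - 1 : ℕ) + -s := by
    rw [Nat.cast_pred finrank_pos]
    ring
  simp only [smul_eq_mul]
  rw [hexp, Real.rpow_add ht, Real.rpow_natCast, mul_assoc]

end Integrability

section GroundState

variable {lam mu : ℝ}

lemma groundState_eq_sqrt_mul_inv_sqrt (hlam : 0 < lam) (x : E3) :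
    groundState lam x = √lam * (√(lam ^ 2 / 3 + ‖x‖ ^ 2))⁻¹ := by
  have hsum : (1 / 3 + ‖x‖ ^ 2 / lam ^ 2) = (lam ^ 2 / 3 + ‖x‖ ^ 2) / lam ^ 2 := by
    field_simp
  rw [groundState, hsum, Real.rpow_neg hlam.le, Real.rpow_neg (by positivity),
    ← Real.sqrt_eq_rpow, ← Real.sqrt_eq_rpow, Real.sqrt_div (by positivity), Real.sqrt_sq hlam.le,
    inv_div, ← mul_div_assoc, inv_mul_eq_div, Real.div_sqrt, div_eq_mul_inv]

lemma groundState_pos (hlam : 0 < lam) (x : E3) : 0 < groundState lam x := by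
  rw [groundState]
  positivity

lemma continuous_groundState (lam : ℝ) : Continuous (groundState lam) := by
  refine .mul continuous_const (.rpow_const (by fun_prop) fun x ↦ .inl ?_)
  positivity

lemma groundState_le_sqrt_three_div (hlam : 0 < lam) (x : E3) : groundState lam x ≤ √(3 / lam) :=
  calc groundState lam x = √lam * (√(lam ^ 2 / 3 + ‖x‖ ^ 2))⁻¹ :=
        groundState_eq_sqrt_mul_inv_sqrt hlam x
    _ ≤ √lam * (√(lam ^ 2 / 3))⁻¹ := by
      gcongr
      exact le_add_of_nonneg_right (sq_nonneg _)
    _ = √(3 / lam) := by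
      rw [← Real.sqrt_inv, ← Real.sqrt_mul hlam.le]
      congr 1
      field_simp

lemma groundState_le_sqrt_mul_inv_norm (hlam : 0 < lam) {x : E3} (hx : x ≠ 0) :
    groundState lam x ≤ √lam * ‖x‖⁻¹ := by
  have : 0 < ‖x‖ := norm_pos_iff.mpr hx
  rw [groundState_eq_sqrt_mul_inv_sqrt hlam]
  gcongr
  exact Real.le_sqrt_of_sq_le (le_add_of_nonneg_left (by positivity))

lemma groundState_smul (hlam : 0 < lam) (hmu : 0 < mu) (x : E3) :
    groundState lam (mu • x) = (√mu)⁻¹ * groundState (lam / mu) x := by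
  have hsum : lam ^ 2 / 3 + ‖mu • x‖ ^ 2 = mu ^ 2 * ((lam / mu) ^ 2 / 3 + ‖x‖ ^ 2) := by
    rw [norm_smul, Real.norm_of_nonneg hmu.le]
    field_simp
  rw [groundState_eq_sqrt_mul_inv_sqrt hlam, groundState_eq_sqrt_mul_inv_sqrt (div_pos hlam hmu),
    hsum, Real.sqrt_mul (sq_nonneg mu), Real.sqrt_sq hmu.le, Real.sqrt_div hlam.le, mul_inv]
  nth_rw 1 [← Real.mul_self_sqrt hmu.le]
  ring

lemma integrable_norm_rpow_mul_groundState_pow (hlam : 0 < lam) {s : ℝ} {n : ℕ} (hs : s < 3)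
    (hsn : 3 < s + n) : Integrable fun x : E3 ↦ ‖x‖ ^ (-s) * groundState lam x ^ n := by
  have hpow (x : E3) : groundState lam x ^ n =
      √lam ^ n * (lam ^ 2 / 3 + ‖x‖ ^ 2) ^ (-n / 2 : ℝ) := by
    rw [groundState_eq_sqrt_mul_inv_sqrt hlam, mul_pow, Real.rpow_div_two_eq_sqrt _ (by positivity),
      Real.rpow_neg (by positivity), Real.rpow_natCast, inv_pow]
  simp only [hpow, mul_left_comm]
  exact (integrable_norm_rpow_mul_add_norm_sq_rpow volume (by positivity)
    (by simpa using hs) (by simpa using hsn)).const_mul _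

lemma integrable_groundState_pow (hlam : 0 < lam) {n : ℕ} (hn : 3 < n) :
    Integrable fun x ↦ groundState lam x ^ n := by
  simpa using integrable_norm_rpow_mul_groundState_pow hlam (s := 0) (n := n)
    (by norm_num) (by simpa using hn)

lemma integrable_inv_norm_mul_groundState_pow (hlam : 0 < lam) {n : ℕ} (hn : 2 < n) :
    Integrable fun x ↦ ‖x‖⁻¹ * groundState lam x ^ n := by
  have hn' : (3 : ℝ) < 1 + n := by exact_mod_cast (by omega : 3 < 1 + n)
  simpa only [Real.rpow_neg_one] using
    integrable_norm_rpow_mul_groundState_pow hlam (s := 1) (by norm_num) hn'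

lemma integrable_groundState_mul_pow (hlam : 0 < lam) (hmu : 0 < mu) {n : ℕ} (hn : 3 < n) :
    Integrable fun x ↦ groundState lam x * groundState mu x ^ n := by
  refine (integrable_groundState_pow hmu hn).bdd_mul (c := √(3 / lam))
    (continuous_groundState lam).aestronglyMeasurable (.of_forall fun x ↦ ?_)
  rw [Real.norm_of_nonneg (groundState_pos hlam x).le]
  exact groundState_le_sqrt_three_div hlam x

lemma integral_groundState_mul_pow_five_eq_div_one (hlam : 0 < lam) (hmu : 0 < mu) :
    ∫ x, groundState lam x * groundState mu x ^ 5 =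
      ∫ x, groundState (lam / mu) x * groundState 1 x ^ 5 := by
  have hscale (x : E3) : groundState lam (mu • x) * groundState mu (mu • x) ^ 5 =
      (mu ^ 3)⁻¹ * (groundState (lam / mu) x * groundState 1 x ^ 5) := by
    have hsix : (√mu)⁻¹ ^ 6 = (mu ^ 3)⁻¹ := by
      rw [inv_pow, pow_mul (√mu) 2 3, Real.sq_sqrt hmu.le]
    rw [groundState_smul hlam hmu, groundState_smul hmu hmu, div_self hmu.ne', ← hsix]
    ring
  have hint := Measure.integral_comp_smul_of_nonneg (volume : Measure E3)
    (fun x ↦ groundState lam x * groundState mu x ^ 5) mu (hR := hmu.le)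
  simp only [hscale, integral_const_mul, finrank_euclideanSpace, Fintype.card_fin,
    smul_eq_mul] at hint
  exact (mul_left_cancel₀ (by positivity) hint).symm

lemma integral_groundState_mul_pow_le_sqrt_three_div_mul (hlam : 0 < lam) (hmu : 0 < mu) {n : ℕ}
    (hn : 3 < n) : ∫ x, groundState lam x * groundState mu x ^ n ≤
      √(3 / lam) * ∫ x, groundState mu x ^ n := by
  rw [← integral_const_mul]
  refine integral_mono (integrable_groundState_mul_pow hlam hmu hn)
    ((integrable_groundState_pow hmu hn).const_mul _) fun x ↦ ?_
  have hpos := groundState_pos hmu x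
  dsimp only
  gcongr
  exact groundState_le_sqrt_three_div hlam x

lemma integral_groundState_mul_pow_le_sqrt_mul (hlam : 0 < lam) (hmu : 0 < mu) {n : ℕ}
    (hn : 3 < n) : ∫ x, groundState lam x * groundState mu x ^ n ≤
      √lam * ∫ x, ‖x‖⁻¹ * groundState mu x ^ n := by
  rw [← integral_const_mul]
  refine integral_mono_ae (integrable_groundState_mul_pow hlam hmu hn)
    ((integrable_inv_norm_mul_groundState_pow hmu (by omega)).const_mul _) ?_
  filter_upwards [Measure.ae_ne volume 0] with x hx
  have hpos := groundState_pos hmu x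
  rw [← mul_assoc]
  gcongr
  exact groundState_le_sqrt_mul_inv_norm hlam hx

lemma exists_integral_groundState_mul_pow_five_le :
    ∃ C > (0 : ℝ), ∀ lam mu : ℝ, 0 < lam → 0 < mu →
      ∫ x, groundState lam x * groundState mu x ^ 5 ≤ C * √(min lam mu / max lam mu) := by
  set A := ∫ x, groundState 1 x ^ 5
  set B := ∫ x, ‖x‖⁻¹ * groundState 1 x ^ 5
  have hA : 0 ≤ A := integral_nonneg fun x ↦ (pow_pos (groundState_pos one_pos x) 5).le
  have hB : 0 ≤ B := integral_nonneg fun x ↦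
    mul_nonneg (by positivity) (pow_pos (groundState_pos one_pos x) 5).le
  refine ⟨√3 * A + B + 1, by positivity, fun lam mu hlam hmu ↦ ?_⟩
  have ht : 0 < lam / mu := div_pos hlam hmu
  rw [integral_groundState_mul_pow_five_eq_div_one hlam hmu]
  rcases le_total lam mu with hle | hle
  · rw [min_eq_left hle, max_eq_right hle]
    calc _ ≤ √(lam / mu) * B :=
          integral_groundState_mul_pow_le_sqrt_mul ht one_pos (by norm_num)
      _ = B * √(lam / mu) := mul_comm _ _
      _ ≤ (√3 * A + B + 1) * √(lam / mu) := by
        gcongr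
        linarith [mul_nonneg (Real.sqrt_nonneg 3) hA]
  · rw [min_eq_right hle, max_eq_left hle]
    calc _ ≤ √(3 / (lam / mu)) * A :=
          integral_groundState_mul_pow_le_sqrt_three_div_mul ht one_pos (by norm_num)
      _ = √3 * A * √(mu / lam) := by
        rw [div_div_eq_mul_div, mul_div_assoc, Real.sqrt_mul (by norm_num)]
        ring
      _ ≤ (√3 * A + B + 1) * √(mu / lam) := by
        gcongr
        linarith

end GroundState

theorem stmt10_general :
    ∃ C > (0 : ℝ), ∀ lam mu : ℝ, 0 < lam → 0 < mu → ∀ l : ℕ, 1 ≤ l → l ≤ 5 →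
      Integrable (fun x ↦ groundState lam x ^ l * groundState mu x ^ (6 - l)) ∧
      ∫ x, groundState lam x ^ l * groundState mu x ^ (6 - l) ≤
        C * √(min lam mu / max lam mu) := by
  obtain ⟨C, hC, hbound⟩ := exists_integral_groundState_mul_pow_five_le
  refine ⟨2 * C, by positivity, fun lam mu hlam hmu l hl hl' ↦ ?_⟩
  have hprod (x : E3) : 0 ≤ groundState lam x ^ l * groundState mu x ^ (6 - l) :=
    mul_nonneg (pow_nonneg (groundState_pos hlam x).le _) (pow_nonneg (groundState_pos hmu x).le _)
  have hyoung (x : E3) : groundState lam x ^ l * groundState mu x ^ (6 - l) ≤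
      groundState lam x * groundState mu x ^ 5 + groundState mu x * groundState lam x ^ 5 := by
    obtain ⟨m, n, rfl, hn, hmn⟩ : ∃ m n, l = m + 1 ∧ 6 - l = n + 1 ∧ m + n + 1 = 5 :=
      ⟨l - 1, 5 - l, by omega, by omega, by omega⟩
    rw [hn, ← hmn]
    exact pow_succ_mul_pow_succ_le (groundState_pos hlam x).le (groundState_pos hmu x).le m n
  have hint₁ := integrable_groundState_mul_pow hlam hmu (n := 5) (by norm_num)
  have hint₂ := integrable_groundState_mul_pow hmu hlam (n := 5) (by norm_num)
  have hint : Integrable fun x ↦ groundState lam x ^ l * groundState mu x ^ (6 - l) :=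
    (hint₁.add hint₂).mono' (((continuous_groundState lam).pow _).mul
      ((continuous_groundState mu).pow _)).aestronglyMeasurable
      (.of_forall fun x ↦ (Real.norm_of_nonneg (hprod x)).trans_le (hyoung x))
  refine ⟨hint, (integral_mono hint (hint₁.add hint₂) hyoung).trans ?_⟩
  have hswap := hbound mu lam hmu hlam
  rw [min_comm, max_comm] at hswap
  rw [integral_add' hint₁ hint₂]
  linarith [hbound lam mu hlam hmu]

theorem stmt10 :
    ∃ C > (0:ℝ), ∀ (lam lam' : ℝ), 0 < lam → 0 < lam' → lam' ≤ lam →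
      ∀ l : ℕ, 1 ≤ l → l ≤ 5 →
        (∫ x : E3, (groundState lam x) ^ l * (groundState lam' x) ^ (6 - l))
          ≤ C * Real.sqrt (lam' / lam) := by
  obtain ⟨C, hC, hbound⟩ := stmt10_general
  exact ⟨C, hC, fun lam lam' hlam hlam' hle l hl hl' ↦ by
    simpa only [min_eq_right hle, max_eq_left hle] using (hbound lam lam' hlam hlam' l hl hl').2⟩

end
end

section
/- Let R > 0 and let G : ℝ → ℝ be continuous with support contained in [0, R], and define v(r,t) = (1/r) ∫_{t−r}^{t+r} G(s) ds for r > 0. Then for every r ∈ (0, R): v(r,0) = (1/r) ∫_0^r G(s) ds, ∂_r v(r,0) = G(r)/r − (1/r²) ∫_0^r G(s) ds, and ∂_t v(r,0) = G(r)/r. Moreover ∫_0^R |∂_t v(r,0)|² r² dr = ∫_0^R |G(s)|² ds, and ∫_0^R ∂_t v(r,0) ( r ∂_r v(r,0) + (1/2) v(r,0) ) r² dr = ∫_0^R s |G(s)|² ds − (1/4) ( ∫_0^R G(s) ds )². -/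
open MeasureTheory

noncomputable section

/-!
Since `G` vanishes on the negative half-line, only the incoming part, carried by `t + r`,
contributes at time zero: with `F r = ∫₀ʳ G`, one has `v = F / r`, `∂ᵣv = G / r - F / r²` and
`∂ₜv = G / r` there. The virial density is then `r G² - F G / 2`, and `F G = (F² / 2)'`.
-/

open Set Function

theorem eq_zero_of_support_subset_Ici_of_lt {α M : Type*} [Preorder α] [Zero M] {f : α → M}
    {a x : α} (hf : support f ⊆ Ici a) (hx : x < a) : f x = 0 :=
  notMem_support.mp fun h => hx.not_ge (hf h)

section IntervalIntegral

variable {E : Type*} [NormedAddCommGroup E] [NormedSpace ℝ E] {f : ℝ → E}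

theorem intervalIntegral_eq_of_support_subset_Ici {a b c : ℝ} (hf : support f ⊆ Ici b)
    (hab : a ≤ b) (hbc : b ≤ c) : ∫ x in a..c, f x = ∫ x in b..c, f x := by
  rw [intervalIntegral.integral_of_le (hab.trans hbc), intervalIntegral.integral_of_le hbc]
  refine setIntegral_eq_of_subset_of_ae_sdiff_eq_zero measurableSet_Ioc.nullMeasurableSet
    (Ioc_subset_Ioc_left hab) ?_
  filter_upwards [volume.ae_ne b] with x hxb hx
  by_contra hfx
  exact hx.2 ⟨(hf hfx).lt_of_ne' hxb, hx.1.2⟩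

theorem hasDerivAt_intervalIntegral_of_continuous [CompleteSpace E] (hf : Continuous f)
    {a b : ℝ → ℝ} {a' b' x : ℝ} (ha : HasDerivAt a a' x) (hb : HasDerivAt b b' x) :
    HasDerivAt (fun y => ∫ s in a y..b y, f s) (b' • f (b x) - a' • f (a x)) x := by
  have hsplit : (fun y => ∫ s in a y..b y, f s)
      = fun y => (∫ s in 0..b y, f s) - ∫ s in 0..a y, f s := by
    funext y
    exact (intervalIntegral.integral_interval_sub_left (hf.intervalIntegrable _ _)
      (hf.intervalIntegrable _ _)).symm
  have hF (y : ℝ) : HasDerivAt (fun u => ∫ s in 0..u, f s) (f y) y :=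
    (hf.integral_hasStrictDerivAt 0 y).hasDerivAt
  rw [hsplit]
  exact ((hF (b x)).scomp x hb).sub ((hF (a x)).scomp x ha)

theorem integral_primitive_mul_self {g : ℝ → ℝ} (hg : Continuous g) (a b : ℝ) :
    ∫ x in a..b, (∫ s in a..x, g s) * g x = (∫ s in a..b, g s) ^ 2 / 2 := by
  have hsubst := intervalIntegral.integral_comp_mul_deriv (a := a) (b := b)
    (fun x _ => (hg.integral_hasStrictDerivAt a x).hasDerivAt) hg.continuousOn continuous_id
  simpa using hsubst

end IntervalIntegral

namespace freeWave

variable {G : ℝ → ℝ}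

theorem hasDerivAt_time (hG : Continuous G) (r t : ℝ) :
    HasDerivAt (fun τ => freeWave G r τ) ((G (t + r) - G (t - r)) / r) t := by
  have hInt := hasDerivAt_intervalIntegral_of_continuous hG
    ((hasDerivAt_id t).sub_const r) ((hasDerivAt_id t).add_const r)
  refine (hInt.const_mul (1 / r)).congr_deriv ?_
  simp only [id_eq, one_smul]
  ring

theorem hasDerivAt_radius (hG : Continuous G) {r : ℝ} (hr : r ≠ 0) (t : ℝ) :
    HasDerivAt (fun ρ => freeWave G ρ t)
      ((G (t + r) + G (t - r)) / r - (1 / r ^ 2) * ∫ s in (t - r)..(t + r), G s) r := by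
  have hInt := hasDerivAt_intervalIntegral_of_continuous hG
    ((hasDerivAt_id r).const_sub t) ((hasDerivAt_id r).const_add t)
  have hInv : HasDerivAt (fun ρ : ℝ => 1 / ρ) (-(r ^ 2)⁻¹) r := by
    simpa only [one_div] using hasDerivAt_inv hr
  refine (hInv.mul hInt).congr_deriv ?_
  simp only [id_eq, one_smul, neg_smul]
  ring

section TimeZero

variable {r R : ℝ}

theorem eq_at_time_zero (hG : support G ⊆ Ici 0) (hr : 0 ≤ r) :
    freeWave G r 0 = (1 / r) * ∫ s in 0..r, G s := by
  rw [freeWave, zero_sub, zero_add,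
    intervalIntegral_eq_of_support_subset_Ici hG (neg_nonpos.mpr hr) hr]

theorem hasDerivAt_time_at_time_zero (hGc : Continuous G) (hG : support G ⊆ Ici 0) (hr : 0 < r) :
    HasDerivAt (fun τ => freeWave G r τ) (G r / r) 0 := by
  have hG_neg : G (-r) = 0 := eq_zero_of_support_subset_Ici_of_lt hG (neg_neg_of_pos hr)
  simpa only [zero_add, zero_sub, hG_neg, sub_zero] using hasDerivAt_time hGc r 0

theorem hasDerivAt_radius_at_time_zero (hGc : Continuous G) (hG : support G ⊆ Ici 0)
    (hr : 0 < r) :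
    HasDerivAt (fun ρ => freeWave G ρ 0) (G r / r - (1 / r ^ 2) * ∫ s in 0..r, G s) r := by
  have hG_neg : G (-r) = 0 := eq_zero_of_support_subset_Ici_of_lt hG (neg_neg_of_pos hr)
  have hInt : ∫ s in (-r)..r, G s = ∫ s in 0..r, G s :=
    intervalIntegral_eq_of_support_subset_Ici hG (neg_nonpos.mpr hr.le) hr.le
  simpa only [zero_add, zero_sub, hG_neg, hInt, add_zero] using hasDerivAt_radius hGc hr.ne' 0

theorem integral_kineticEnergy (hGc : Continuous G) (hG : support G ⊆ Ici 0) (hR : 0 ≤ R) :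
    ∫ r in 0..R, (deriv (fun τ => freeWave G r τ) 0) ^ 2 * r ^ 2 = ∫ s in 0..R, (G s) ^ 2 := by
  refine intervalIntegral.integral_congr_Ioo_of_le hR fun r hr => ?_
  have hr0 : r ≠ 0 := hr.1.ne'
  simp only [(hasDerivAt_time_at_time_zero hGc hG hr.1).deriv]
  field_simp

theorem virialDensity_eq (hGc : Continuous G) (hG : support G ⊆ Ici 0) (hr : 0 < r) :
    deriv (fun τ => freeWave G r τ) 0 *
        (r * deriv (fun ρ => freeWave G ρ 0) r + (1/2) * freeWave G r 0) * r ^ 2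
      = r * (G r) ^ 2 - (1/2) * ((∫ s in 0..r, G s) * G r) := by
  rw [(hasDerivAt_time_at_time_zero hGc hG hr).deriv,
    (hasDerivAt_radius_at_time_zero hGc hG hr).deriv, eq_at_time_zero hG hr.le]
  field_simp
  ring

theorem integral_virial (hGc : Continuous G) (hG : support G ⊆ Ici 0) (hR : 0 ≤ R) :
    ∫ r in 0..R, deriv (fun τ => freeWave G r τ) 0 *
        (r * deriv (fun ρ => freeWave G ρ 0) r + (1/2) * freeWave G r 0) * r ^ 2
      = (∫ s in 0..R, s * (G s) ^ 2) - (1/4) * (∫ s in 0..R, G s) ^ 2 := by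
  have hF : Continuous fun r => ∫ s in 0..r, G s :=
    intervalIntegral.continuous_primitive (fun a b => hGc.intervalIntegrable a b) 0
  have hsG : Continuous fun s => s * (G s) ^ 2 := by fun_prop
  have hFG : Continuous fun r => (1/2) * ((∫ s in 0..r, G s) * G r) :=
    continuous_const.mul (hF.mul hGc)
  calc
    _ = ∫ r in 0..R, (r * (G r) ^ 2 - (1/2) * ((∫ s in 0..r, G s) * G r)) :=
      intervalIntegral.integral_congr_Ioo_of_le hR fun r hr => virialDensity_eq hGc hG hr.1
    _ = (∫ s in 0..R, s * (G s) ^ 2) - (1/2) * ((∫ s in 0..R, G s) ^ 2 / 2) := by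
      rw [intervalIntegral.integral_sub (hsG.intervalIntegrable _ _) (hFG.intervalIntegrable _ _),
        intervalIntegral.integral_const_mul, integral_primitive_mul_self hGc]
    _ = _ := by ring

end TimeZero

end freeWave

theorem stmt16_general {R : ℝ} (hR : 0 ≤ R) {G : ℝ → ℝ} (hGc : Continuous G)
    (hGs : support G ⊆ Ici 0) :
    (∀ r > 0,
      freeWave G r 0 = (1 / r) * ∫ s in 0..r, G s ∧
      HasDerivAt (fun ρ => freeWave G ρ 0) (G r / r - (1 / r ^ 2) * ∫ s in 0..r, G s) r ∧
      HasDerivAt (fun τ => freeWave G r τ) (G r / r) 0) ∧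
    (∫ r in 0..R, (deriv (fun τ => freeWave G r τ) 0) ^ 2 * r ^ 2) = (∫ s in 0..R, (G s) ^ 2) ∧
    (∫ r in 0..R, deriv (fun τ => freeWave G r τ) 0 *
        (r * deriv (fun ρ => freeWave G ρ 0) r + (1/2) * freeWave G r 0) * r ^ 2)
      = (∫ s in 0..R, s * (G s) ^ 2) - (1/4) * (∫ s in 0..R, G s) ^ 2 :=
  ⟨fun _ hr => ⟨freeWave.eq_at_time_zero hGs hr.le,
      freeWave.hasDerivAt_radius_at_time_zero hGc hGs hr,
      freeWave.hasDerivAt_time_at_time_zero hGc hGs hr⟩,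
    freeWave.integral_kineticEnergy hGc hGs hR, freeWave.integral_virial hGc hGs hR⟩

theorem stmt16 (R : ℝ) (hR : 0 < R) (G : ℝ → ℝ) (hGc : Continuous G)
    (hGs : Function.support G ⊆ Set.Icc 0 R) :
    (∀ r ∈ Set.Ioo (0:ℝ) R,
      freeWave G r 0 = (1 / r) * ∫ s in (0:ℝ)..r, G s ∧
      deriv (fun ρ => freeWave G ρ 0) r
        = G r / r - (1 / r ^ 2) * ∫ s in (0:ℝ)..r, G s ∧
      deriv (fun τ => freeWave G r τ) 0 = G r / r) ∧
    (∫ r in (0:ℝ)..R, (deriv (fun τ => freeWave G r τ) 0) ^ 2 * r ^ 2)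
      = (∫ s in (0:ℝ)..R, (G s) ^ 2) ∧
    (∫ r in (0:ℝ)..R, deriv (fun τ => freeWave G r τ) 0 *
        (r * deriv (fun ρ => freeWave G ρ 0) r + (1/2) * freeWave G r 0) * r ^ 2)
      = (∫ s in (0:ℝ)..R, s * (G s) ^ 2) - (1/4) * (∫ s in (0:ℝ)..R, G s) ^ 2 := by
  obtain ⟨hpt, hint⟩ := stmt16_general hR.le hGc (hGs.trans Icc_subset_Ici_self)
  exact ⟨fun r hr => (hpt r hr.1).imp_right (And.imp HasDerivAt.deriv HasDerivAt.deriv), hint⟩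

end
end

section
/- Let c > 0 and ε > 0. Let (φ_m)_{m≥0} be a sequence of positive real numbers and (k_m)_{m≥0} a sequence of nonnegative integers such that for every m ≥ 0: φ_{m+1} ≤ φ_m − c² 4^{k_m} φ_m² and 2^{k_m} ≤ c^{−1} φ_m^{−1/2}. Then φ_m → 0 as m → ∞ and the series ∑_{m=0}^{∞} 2^{k_m} φ_m^{1+ε} converges. -/
noncomputable section

/-!
A nonincreasing positive sequence satisfies `∑ (φ m - φ (m + 1)) * φ m ^ (ε - 1) < ∞` for every
`ε > 0`: the terms are those of a lower Riemann sum of `∫ x ^ (ε - 1)` over `(0, φ 0]` if `ε ≤ 1`,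
and are at most `φ 0 ^ (ε - 1) * (φ m - φ (m + 1))` if `ε ≥ 1`. A recursion
`φ (m + 1) ≤ φ m - a m * φ m ^ p` bounds `a m * φ m ^ p` by the decrement of `φ`, which gives the
convergence of `∑ a m * φ m ^ (p - 1 + ε)`. For `ε = 1` the sum is `∑ a m * φ m ^ p`; were the
limit of `φ` positive, `∑ a m` would converge as well.
-/

open Filter Topology

theorem summable_sub_succ_of_antitone {f : ℕ → ℝ} (hf : Antitone f)
    (hbdd : BddBelow (Set.range f)) : Summable fun m => f m - f (m + 1) := by
  obtain ⟨b, hb⟩ := hbdd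
  refine summable_of_sum_range_le (c := f 0 - b)
    (fun m => sub_nonneg.2 (hf m.le_succ)) fun n => ?_
  rw [Finset.sum_range_sub']
  exact sub_le_sub_left (hb (Set.mem_range_self n)) _

theorem mul_sub_mul_rpow_sub_one_le_rpow_sub_rpow {x y p : ℝ} (hx : 0 < x) (hy : 0 ≤ y)
    (hp₀ : 0 ≤ p) (hp₁ : p ≤ 1) : p * ((x - y) * x ^ (p - 1)) ≤ x ^ p - y ^ p := by
  have bernoulli : (y / x) ^ p ≤ 1 + p * (y / x - 1) := by
    have hs : -1 ≤ y / x - 1 := by linarith [div_nonneg hy hx.le]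
    simpa only [add_sub_cancel] using rpow_one_add_le_one_add_mul_self hs hp₀ hp₁
  calc p * ((x - y) * x ^ (p - 1)) = x ^ p - x ^ p * (1 + p * (y / x - 1)) := by
        rw [Real.rpow_sub_one hx.ne']
        field_simp
        ring
    _ ≤ x ^ p - x ^ p * (y / x) ^ p := by gcongr
    _ = x ^ p - y ^ p := by
        rw [← Real.mul_rpow hx.le (div_nonneg hy hx.le), mul_div_cancel₀ _ hx.ne']

section AntitoneSequence

variable {φ : ℕ → ℝ} {ε : ℝ}

theorem summable_sub_succ_mul_rpow_of_le_one (hφ : ∀ m, 0 < φ m) (hanti : Antitone φ)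
    (hε₀ : 0 < ε) (hε₁ : ε ≤ 1) :
    Summable fun m => (φ m - φ (m + 1)) * φ m ^ (ε - 1) := by
  have hpow_anti : Antitone fun m => φ m ^ ε := fun m n hmn =>
    Real.rpow_le_rpow (hφ n).le (hanti hmn) hε₀.le
  have hpow_bdd : BddBelow (Set.range fun m => φ m ^ ε) :=
    ⟨0, Set.forall_mem_range.2 fun m => Real.rpow_nonneg (hφ m).le ε⟩
  refine (summable_mul_left_iff hε₀.ne').1 <|
    (summable_sub_succ_of_antitone hpow_anti hpow_bdd).of_nonneg_of_le (fun m => ?_) fun m =>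
      mul_sub_mul_rpow_sub_one_le_rpow_sub_rpow (hφ m) (hφ (m + 1)).le hε₀.le hε₁
  exact mul_nonneg hε₀.le <|
    mul_nonneg (sub_nonneg.2 (hanti m.le_succ)) (Real.rpow_nonneg (hφ m).le _)

theorem summable_sub_succ_mul_rpow_of_one_le (hφ : ∀ m, 0 ≤ φ m) (hanti : Antitone φ)
    (hε : 1 ≤ ε) : Summable fun m => (φ m - φ (m + 1)) * φ m ^ (ε - 1) := by
  have hdecr (m : ℕ) : 0 ≤ φ m - φ (m + 1) := sub_nonneg.2 (hanti m.le_succ)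
  have hbdd : BddBelow (Set.range φ) := ⟨0, Set.forall_mem_range.2 hφ⟩
  refine ((summable_sub_succ_of_antitone hanti hbdd).mul_right (φ 0 ^ (ε - 1))).of_nonneg_of_le
    (fun m => mul_nonneg (hdecr m) (Real.rpow_nonneg (hφ m) _)) fun m => ?_
  exact mul_le_mul_of_nonneg_left
    (Real.rpow_le_rpow (hφ m) (hanti m.zero_le) (sub_nonneg.2 hε)) (hdecr m)

theorem summable_sub_succ_mul_rpow (hφ : ∀ m, 0 < φ m) (hanti : Antitone φ) (hε : 0 < ε) :
    Summable fun m => (φ m - φ (m + 1)) * φ m ^ (ε - 1) := by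
  rcases le_total ε 1 with hε₁ | hε₁
  · exact summable_sub_succ_mul_rpow_of_le_one hφ hanti hε hε₁
  · exact summable_sub_succ_mul_rpow_of_one_le (fun m => (hφ m).le) hanti hε₁

end AntitoneSequence

section Recursion

variable {φ a : ℕ → ℝ} {p : ℝ}

theorem antitone_of_succ_le_sub_mul_rpow (hφ : ∀ m, 0 ≤ φ m) (ha : ∀ m, 0 ≤ a m)
    (hrec : ∀ m, φ (m + 1) ≤ φ m - a m * φ m ^ p) : Antitone φ :=
  antitone_nat_of_succ_le fun m =>
    (hrec m).trans (sub_le_self _ (mul_nonneg (ha m) (Real.rpow_nonneg (hφ m) p)))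

theorem summable_mul_rpow_of_succ_le_sub_mul_rpow (hφ : ∀ m, 0 < φ m) (ha : ∀ m, 0 ≤ a m)
    (hrec : ∀ m, φ (m + 1) ≤ φ m - a m * φ m ^ p) {ε : ℝ} (hε : 0 < ε) :
    Summable fun m => a m * φ m ^ (p - 1 + ε) := by
  have hanti := antitone_of_succ_le_sub_mul_rpow (fun m => (hφ m).le) ha hrec
  refine (summable_sub_succ_mul_rpow hφ hanti hε).of_nonneg_of_le
    (fun m => mul_nonneg (ha m) (Real.rpow_nonneg (hφ m).le _)) fun m => ?_
  calc a m * φ m ^ (p - 1 + ε) = a m * φ m ^ p * φ m ^ (ε - 1) := by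
        rw [mul_assoc, ← Real.rpow_add (hφ m), add_sub_left_comm, add_comm ε]
    _ ≤ (φ m - φ (m + 1)) * φ m ^ (ε - 1) :=
        mul_le_mul_of_nonneg_right (le_sub_comm.1 (hrec m)) (Real.rpow_nonneg (hφ m).le _)

theorem tendsto_zero_of_succ_le_sub_mul_rpow (hφ : ∀ m, 0 < φ m) (ha : ∀ m, 0 ≤ a m)
    (ha_sum : ¬Summable a) (hrec : ∀ m, φ (m + 1) ≤ φ m - a m * φ m ^ p) :
    Tendsto φ atTop (𝓝 0) := by
  have hanti := antitone_of_succ_le_sub_mul_rpow (fun m => (hφ m).le) ha hrec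
  have hlim : Tendsto φ atTop (𝓝 (⨅ m, φ m)) :=
    tendsto_atTop_ciInf hanti ⟨0, Set.forall_mem_range.2 fun m => (hφ m).le⟩
  suffices hzero : ⨅ m, φ m = 0 by rwa [hzero] at hlim
  by_contra hne
  have hsum : Summable fun m => a m * φ m ^ p := by
    simpa only [sub_add_cancel] using
      summable_mul_rpow_of_succ_le_sub_mul_rpow hφ ha hrec zero_lt_one
  have hpow : Tendsto (fun m => φ m ^ (-p)) cofinite (𝓝 ((⨅ m, φ m) ^ (-p))) := by
    rw [Nat.cofinite_eq_atTop]
    exact hlim.rpow_const (Or.inl hne)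
  refine ha_sum ((hsum.norm.mul_tendsto_const hpow).congr fun m => ?_)
  rw [mul_assoc, ← Real.rpow_add (hφ m), add_neg_cancel, Real.rpow_zero, mul_one]

end Recursion

theorem stmt17_general {φ w : ℕ → ℝ} {p ε C : ℝ} (hC : 0 < C) (hε : 0 < ε)
    (hφ : ∀ m, 0 < φ m) (hw : ∀ m, 0 ≤ w m) (hw_sum : ¬Summable w)
    (hrec : ∀ m, φ (m + 1) ≤ φ m - C * w m * φ m ^ p) :
    Tendsto φ atTop (𝓝 0) ∧ Summable fun m => w m * φ m ^ (p - 1 + ε) := by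
  have hCw (m : ℕ) : 0 ≤ C * w m := mul_nonneg hC.le (hw m)
  have hCw_sum : ¬Summable fun m => C * w m := by rwa [summable_mul_left_iff hC.ne']
  refine ⟨tendsto_zero_of_succ_le_sub_mul_rpow hφ hCw hCw_sum hrec, ?_⟩
  rw [← summable_mul_left_iff hC.ne']
  simpa only [mul_assoc] using summable_mul_rpow_of_succ_le_sub_mul_rpow hφ hCw hrec hε

theorem not_summable_pow_of_one_le {r : ℝ} (hr : 1 ≤ r) (k : ℕ → ℕ) :
    ¬Summable fun m => r ^ k m := fun hsum =>
  one_ne_zero <| summable_const_iff (1 : ℝ) |>.1 <|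
    hsum.of_nonneg_of_le (fun _ => zero_le_one) fun _ => one_le_pow₀ hr

theorem stmt17 (c ε : ℝ) (hc : 0 < c) (hε : 0 < ε)
    (φ : ℕ → ℝ) (k : ℕ → ℕ)
    (hφ : ∀ m, 0 < φ m)
    (h1 : ∀ m, φ (m + 1) ≤ φ m - c ^ 2 * 4 ^ (k m) * (φ m) ^ 2)
    (h2 : ∀ m, (2:ℝ) ^ (k m) ≤ c⁻¹ * (φ m) ^ (-(1/2) : ℝ)) :
    Filter.Tendsto φ Filter.atTop (nhds 0) ∧
      Summable (fun m => (2:ℝ) ^ (k m) * (φ m) ^ ((1:ℝ) + ε)) := by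
  have hrec (m : ℕ) : φ (m + 1) ≤ φ m - c ^ 2 * 2 ^ k m * φ m ^ (2 : ℝ) := by
    rw [Real.rpow_two]
    exact (h1 m).trans (by gcongr; norm_num)
  have h := stmt17_general (pow_pos hc 2) hε hφ (fun m => by positivity)
    (not_summable_pow_of_one_le one_le_two k) hrec
  rwa [show (2 : ℝ) - 1 = 1 by norm_num] at h

end
end
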